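/- For every pair of integers (d, r) with d ≥ 4, d − r odd, and d/2 ≤ r ≤ 3(d−1)/4 (i.e. 2r ≥ d and 4r ≤ 3(d−1)), there exists a line arrangement A of d lines in the real projective plane which is maximal Tjurina of type (d, r). -/

import Mathlib

open Classical MvPolynomial

variable {K : Type*} [Field K] [CharZero K] {ℓ : ℕ}

/-- A (central) hyperplane arrangement: a finite set of nonzero linear forms,
pairwise non-proportional. -/
def IsArrangement (A : Finset (MvPolynomial (Fin ℓ) K)) : Prop :=
  (∀ α ∈ A, α ≠ 0 ∧ α.IsHomogeneous 1) ∧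
    ∀ α ∈ A, ∀ β ∈ A, α ≠ β → ∀ c : K, α ≠ c • β

/-- The arrangement is essential: the common zero set of its forms is `{0}`. -/
def IsEssential (A : Finset (MvPolynomial (Fin ℓ) K)) : Prop :=
  ∀ v : Fin ℓ → K, (∀ α ∈ A, eval v α = 0) → v = 0

/-- The defining polynomial `Q(A)`. -/
noncomputable def Qpoly (A : Finset (MvPolynomial (Fin ℓ) K)) : MvPolynomial (Fin ℓ) K :=
  ∏ α ∈ A, α

/-- Apply a derivation `θ = Σ θ_j ∂_j` to a polynomial. -/
noncomputable def applyDer (θ : Fin ℓ → MvPolynomial (Fin ℓ) K)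
    (f : MvPolynomial (Fin ℓ) K) : MvPolynomial (Fin ℓ) K :=
  ∑ j, θ j * pderiv j f

/-- The minimal degree of a Jacobian relation `r(A)`. -/
noncomputable def mdr (A : Finset (MvPolynomial (Fin ℓ) K)) : ℕ :=
  sInf {r | ∃ θ : Fin ℓ → MvPolynomial (Fin ℓ) K, θ ≠ 0 ∧
    (∀ j, (θ j).IsHomogeneous r) ∧ applyDer θ (Qpoly A) = 0}

/-- The number of elements `|A^H|` of the restriction of `A` to `H`:
the number of distinct subspaces `H ∩ ker α_L`, `L ∈ A \ {H}`. -/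
noncomputable def restCard (A : Finset (MvPolynomial (Fin ℓ) K))
    (H : MvPolynomial (Fin ℓ) K) : ℕ :=
  ((A.erase H).image fun L => {v : Fin ℓ → K | eval v H = 0 ∧ eval v L = 0}).card

/-- The number `n_j(A)` of intersection points of multiplicity `j` of a line
arrangement `A` in `P^2`. An intersection point is encoded (bijectively) by the set
of lines of `A` passing through it, which has at least two elements. -/
noncomputable def nPoints (A : Finset (MvPolynomial (Fin 3) K)) (j : ℕ) : ℕ :=
  Set.ncard {T : Finset (MvPolynomial (Fin 3) K) |
    ∃ v : Fin 3 → K, v ≠ 0 ∧ T = A.filter (fun α => eval v α = 0) ∧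
      2 ≤ T.card ∧ T.card = j}

/-- The maximal multiplicity `m(A)` of an intersection point of `A`. -/
noncomputable def maxMult (A : Finset (MvPolynomial (Fin 3) K)) : ℕ :=
  sSup {j | 2 ≤ j ∧ nPoints A j ≠ 0}

/-- The global Tjurina number `τ(A) = Σ_{j ≥ 2} n_j(A)·(j−1)²` of a line arrangement. -/
noncomputable def tjurina (A : Finset (MvPolynomial (Fin 3) K)) : ℕ :=
  ∑ j ∈ Finset.range (A.card + 1), nPoints A j * (j - 1) ^ 2

/-- `τ(d,r)_max = (d−1)(d−r−1) + r² − C(2r−d+2, 2)`, for `d/2 ≤ r ≤ d−1`. -/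
def tauMax (d r : ℕ) : ℕ :=
  (d - 1) * (d - r - 1) + r ^ 2 - Nat.choose (2 * r - d + 2) 2

/-- A line arrangement `A` is maximal Tjurina of type `(d, r)` if it consists of `d`
lines, `r(A) = r` and `τ(A) = τ(d,r)_max`. -/
def IsMaxTjurina (A : Finset (MvPolynomial (Fin 3) K)) (d r : ℕ) : Prop :=
  A.card = d ∧ mdr A = r ∧ tjurina A = tauMax d r

/-!
Call a derivation logarithmic along an arrangement if it preserves the ideal of each of its lines.
Suppose that no nontrivial logarithmic derivation (one that is not a multiple of the Euler
derivation) has degree less than `r`, and that a new line `H` meets the arrangement in at least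
`r + 2` points. Then after adding `H` none has degree less than `r + 1`: a logarithmic derivation of
degree at most `r` restricts to `H` and preserves at least `r + 2` points there, so the restriction
is a multiple of the Euler derivation, and subtracting this multiple leaves the equation of `H`
times a logarithmic derivation of degree less than `r`. If `H` meets the arrangement in exactly
`r + 2` points, then the Tjurina number changes just as the maximal one does from type `(d, r)` to
type `(d + 1, r + 1)`. The upper bound for the minimal degree of a relation comes from a point of
high multiplicity.

Write `d - r = 2 * k + 1` and start from the grid of `2 * k` vertical and `2 * k` horizontal lines
together with the line at infinity. The diagonals `x - y = 1, …, 2 * k`, and after them up to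
`2 * k` suitable antidiagonals `x + y = s`, can be added one by one in this way.
-/

section LinearForms

variable {F : Type*} [Field F]

/-- The linear form `∑ aᵢ xᵢ` with coefficient vector `a`. -/
noncomputable def linForm (a : Fin ℓ → F) : MvPolynomial (Fin ℓ) F :=
  ∑ i, C (a i) * X i

lemma linForm_isHomogeneous (a : Fin ℓ → F) : (linForm a).IsHomogeneous 1 :=
  IsHomogeneous.sum _ _ _ fun i _ => isHomogeneous_C_mul_X (a i) i

@[simp]
lemma eval_linForm (a v : Fin ℓ → F) : eval v (linForm a) = a ⬝ᵥ v := by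
  simp [linForm, dotProduct]

@[simp]
lemma pderiv_linForm (a : Fin ℓ → F) (i : Fin ℓ) : pderiv i (linForm a) = C (a i) := by
  simp [linForm, pderiv_X, Pi.single_apply]

lemma linForm_smul (c : F) (a : Fin ℓ → F) : linForm (c • a) = c • linForm a := by
  simp [linForm, smul_eq_C_mul, Finset.mul_sum, mul_assoc]

lemma linForm_injective : Function.Injective (linForm : (Fin ℓ → F) → _) := fun a b h => by
  funext i
  simpa using congrArg (pderiv i) h

@[simp]
lemma linForm_eq_zero {a : Fin ℓ → F} : linForm a = 0 ↔ a = 0 := by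
  rw [← linForm_injective.eq_iff (b := 0)]
  simp [linForm]

lemma exists_eq_linForm {α : MvPolynomial (Fin ℓ) F} (hα : α.IsHomogeneous 1) :
    ∃ a, α = linForm a := by
  rw [← mem_homogeneousSubmodule, homogeneousSubmodule_one_eq_span_X,
    Submodule.mem_span_range_iff_exists_fun] at hα
  obtain ⟨a, rfl⟩ := hα
  exact ⟨a, by simp [linForm, smul_eq_C_mul]⟩

lemma eval_smul_of_isHomogeneous {α : MvPolynomial (Fin ℓ) F} (hα : α.IsHomogeneous 1) (c : F)
    (v : Fin ℓ → F) : eval (c • v) α = c * eval v α := by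
  obtain ⟨a, rfl⟩ := exists_eq_linForm hα
  simp

lemma exists_eq_smul_of_dvd {α β : MvPolynomial (Fin ℓ) F} (hα : α.IsHomogeneous 1)
    (hα₀ : α ≠ 0) (hβ : β.IsHomogeneous 1) (h : β ∣ α) : ∃ c : F, α = c • β := by
  obtain ⟨q, rfl⟩ := h
  have hdeg := totalDegree_mul_of_isDomain (left_ne_zero_of_mul hα₀) (right_ne_zero_of_mul hα₀)
  rw [hα.totalDegree hα₀, hβ.totalDegree (left_ne_zero_of_mul hα₀)] at hdeg
  obtain ⟨c, rfl⟩ : ∃ c, q = C c := ⟨_, totalDegree_eq_zero_iff_eq_C.mp (by omega)⟩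
  exact ⟨c, by rw [smul_eq_C_mul, mul_comm]⟩

lemma prime_of_isHomogeneous_one {α : MvPolynomial (Fin ℓ) F} (hα : α.IsHomogeneous 1)
    (hα₀ : α ≠ 0) : Prime α := by
  refine (irreducible_of_totalDegree_eq_one (hα.totalDegree hα₀) fun x hx => ?_).prime
  obtain ⟨m, hm⟩ := ne_zero_iff.mp hα₀
  exact (ne_zero_of_dvd_ne_zero hm (hx m)).isUnit

end LinearForms

section Arrangements

variable {F : Type*} [Field F] {A B : Finset (MvPolynomial (Fin ℓ) F)}
  {H L : MvPolynomial (Fin ℓ) F}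

lemma IsArrangement.mono (hA : IsArrangement A) (hBA : B ⊆ A) : IsArrangement B :=
  ⟨fun α hα => hA.1 α (hBA hα), fun α hα β hβ => hA.2 α (hBA hα) β (hBA hβ)⟩

lemma IsArrangement.ne_zero (hA : IsArrangement A) (hL : L ∈ A) : L ≠ 0 := (hA.1 L hL).1

lemma IsArrangement.isHomogeneous (hA : IsArrangement A) (hL : L ∈ A) : L.IsHomogeneous 1 :=
  (hA.1 L hL).2

lemma IsArrangement.prime (hA : IsArrangement A) (hL : L ∈ A) : Prime L :=
  prime_of_isHomogeneous_one (hA.isHomogeneous hL) (hA.ne_zero hL)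

lemma IsArrangement.not_dvd (hA : IsArrangement A) (hH : H ∈ A) (hL : L ∈ A) (hne : H ≠ L) :
    ¬ H ∣ L := fun h => by
  obtain ⟨c, hc⟩ := exists_eq_smul_of_dvd (hA.isHomogeneous hL) (hA.ne_zero hL)
    (hA.isHomogeneous hH) h
  exact hA.2 L hL H hH hne.symm c hc

lemma IsArrangement.prod_dvd (hA : IsArrangement A) {q : MvPolynomial (Fin ℓ) F}
    (h : ∀ L ∈ A, L ∣ q) : ∏ L ∈ A, L ∣ q := by
  refine Finset.prod_dvd_of_isRelPrime (fun H hH L hL hne => ?_) h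
  exact (hA.prime hH).irreducible.isRelPrime_iff_not_dvd.mpr (hA.not_dvd hH hL hne)

lemma IsArrangement.prod_isHomogeneous (hA : IsArrangement A) :
    (∏ L ∈ A, L).IsHomogeneous A.card := by
  simpa using IsHomogeneous.prod A id (fun _ => 1) fun L hL => hA.isHomogeneous hL

lemma IsArrangement.prod_ne_zero (hA : IsArrangement A) : ∏ L ∈ A, L ≠ 0 :=
  Finset.prod_ne_zero_iff.mpr fun _ hL => hA.ne_zero hL

end Arrangements

section Derivations

variable {F : Type*} [Field F]

@[simp]
lemma applyDer_X (θ : Fin ℓ → MvPolynomial (Fin ℓ) F) (i : Fin ℓ) : applyDer θ (X i) = θ i := by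
  simp [applyDer, pderiv_X, Pi.single_apply]

lemma applyDer_linForm (θ : Fin ℓ → MvPolynomial (Fin ℓ) F) (a : Fin ℓ → F) :
    applyDer θ (linForm a) = ∑ j, θ j * C (a j) := by
  simp [applyDer]

lemma applyDer_add (θ : Fin ℓ → MvPolynomial (Fin ℓ) F) (f g : MvPolynomial (Fin ℓ) F) :
    applyDer θ (f + g) = applyDer θ f + applyDer θ g := by
  simp [applyDer, mul_add, Finset.sum_add_distrib]

lemma applyDer_mul (θ : Fin ℓ → MvPolynomial (Fin ℓ) F) (f g : MvPolynomial (Fin ℓ) F) :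
    applyDer θ (f * g) = f * applyDer θ g + g * applyDer θ f := by
  simp only [applyDer, Derivation.leibniz, smul_eq_mul, mul_add, Finset.sum_add_distrib,
    Finset.mul_sum, mul_left_comm]

lemma add_applyDer (θ η : Fin ℓ → MvPolynomial (Fin ℓ) F) (f : MvPolynomial (Fin ℓ) F) :
    applyDer (θ + η) f = applyDer θ f + applyDer η f := by
  simp [applyDer, add_mul, Finset.sum_add_distrib]

lemma smul_applyDer (p : MvPolynomial (Fin ℓ) F) (θ : Fin ℓ → MvPolynomial (Fin ℓ) F)
    (f : MvPolynomial (Fin ℓ) F) : applyDer (p • θ) f = p * applyDer θ f := by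
  simp [applyDer, Finset.mul_sum, mul_assoc]

lemma applyDer_X_of_isHomogeneous {f : MvPolynomial (Fin ℓ) F} {m : ℕ} (hf : f.IsHomogeneous m) :
    applyDer X f = m • f :=
  hf.sum_X_mul_pderiv

lemma applyDer_C_of_isHomogeneous_one (v : Fin ℓ → F) {α : MvPolynomial (Fin ℓ) F}
    (hα : α.IsHomogeneous 1) : applyDer (fun i => C (v i)) α = C (eval v α) := by
  obtain ⟨a, rfl⟩ := exists_eq_linForm hα
  simp [applyDer_linForm, dotProduct, mul_comm]

lemma applyDer_prod_eq_zero {ι : Type*} (s : Finset ι) (p : ι → MvPolynomial (Fin ℓ) F)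
    (θ : Fin ℓ → MvPolynomial (Fin ℓ) F) (h : ∀ i ∈ s, applyDer θ (p i) = 0) :
    applyDer θ (∏ i ∈ s, p i) = 0 := by
  refine Finset.prod_induction p (fun f => applyDer θ f = 0) (fun f g hf hg => ?_) ?_ h
  · rw [applyDer_mul, hf, hg, mul_zero, mul_zero, add_zero]
  · simp [applyDer]

end Derivations

section LogarithmicDerivations

variable {F : Type*} [Field F] {A B : Finset (MvPolynomial (Fin ℓ) F)}

/-- The derivation `∑ θⱼ ∂ⱼ` is logarithmic along `A`: it preserves the ideal of every hyperplane
of `A`. -/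
def IsLogDer (A : Finset (MvPolynomial (Fin ℓ) F)) (θ : Fin ℓ → MvPolynomial (Fin ℓ) F) : Prop :=
  ∀ L ∈ A, L ∣ applyDer θ L

/-- Every logarithmic derivation along `A` of degree less than `r` is a multiple of the Euler
derivation `∑ xⱼ ∂ⱼ`. The zero polynomial counts as having negative degree, so that nothing is
required for `r = 0`. -/
def LogDerTrivialBelow (A : Finset (MvPolynomial (Fin ℓ) F)) (r : ℕ) : Prop :=
  ∀ θ : Fin ℓ → MvPolynomial (Fin ℓ) F, IsLogDer A θ →
    (∀ i, θ i ≠ 0 → (θ i).totalDegree < r) → ∃ g : MvPolynomial (Fin ℓ) F, θ = g • X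

lemma LogDerTrivialBelow.mono {r : ℕ} (h : LogDerTrivialBelow A r) (hAB : A ⊆ B) :
    LogDerTrivialBelow B r :=
  fun θ hθ => h θ fun L hL => hθ L (hAB hL)

lemma logDerTrivialBelow_zero : LogDerTrivialBelow A 0 := fun θ _ hdeg =>
  ⟨0, funext fun i => by_contra fun hi => by simpa using hdeg i (by simpa using hi)⟩

lemma IsArrangement.isLogDer_of_applyDer_Qpoly_eq_zero (hA : IsArrangement A)
    {θ : Fin ℓ → MvPolynomial (Fin ℓ) F} (hθ : applyDer θ (Qpoly A) = 0) : IsLogDer A θ := by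
  intro L hL
  have hQ : Qpoly A = L * ∏ M ∈ A.erase L, M := (Finset.mul_prod_erase A id hL).symm
  rw [hQ, applyDer_mul] at hθ
  have hdvd : L ∣ (∏ M ∈ A.erase L, M) * applyDer θ L :=
    (dvd_add_right (dvd_mul_right L _)).mp (hθ ▸ dvd_zero L)
  refine ((hA.prime hL).dvd_or_dvd hdvd).resolve_left fun h => ?_
  obtain ⟨M, hM, hLM⟩ := (hA.prime hL).dvd_finsetProd_iff _ |>.mp h
  exact hA.not_dvd hL (Finset.mem_of_mem_erase hM) (Finset.ne_of_mem_erase hM).symm hLM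

lemma C_mul_ne_smul_X [Nontrivial (Fin ℓ)] {v : Fin ℓ → F} (hv : v ≠ 0)
    {G : MvPolynomial (Fin ℓ) F} (hG : G ≠ 0) (g : MvPolynomial (Fin ℓ) F) :
    (G • fun i => C (v i)) ≠ g • (X : Fin ℓ → MvPolynomial (Fin ℓ) F) := by
  intro h
  have hcoord (i : Fin ℓ) : G * C (v i) = g * X i := congrFun h i
  obtain ⟨j, hj⟩ := Function.ne_iff.mp hv
  obtain ⟨i, hij⟩ := exists_ne j
  have hprop : C (v j) * X i = C (v i) * X j :=
    mul_left_cancel₀ hG (by linear_combination X i * hcoord j - X j * hcoord i)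
  have hderiv := congrArg (pderiv i) hprop
  exact hj (by simpa [pderiv_X, hij.symm] using hderiv)

end LogarithmicDerivations

section MinimalDegree

variable {F : Type*} [Field F] {A P : Finset (MvPolynomial (Fin ℓ) F)}

/-- The Jacobian relation of an arrangement `A` with `P ⊆ A` a pencil through `v`: the constant
derivation in direction `v`, times the product `G` of the hyperplanes of `A` outside `P`, corrected
by a multiple of the Euler derivation so that it annihilates `Qpoly A`. -/
noncomputable def pencilRelation (A P : Finset (MvPolynomial (Fin ℓ) F)) (v : Fin ℓ → F) :
    Fin ℓ → MvPolynomial (Fin ℓ) F :=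
  let G := ∏ L ∈ A \ P, L
  G • (fun i => C (v i)) + (-C (A.card : F)⁻¹ * applyDer (fun i => C (v i)) G) • X

lemma IsArrangement.pencilRelation_isHomogeneous (hA : IsArrangement A) (v : Fin ℓ → F)
    (i : Fin ℓ) : (pencilRelation A P v i).IsHomogeneous (A \ P).card := by
  have hG := (hA.mono (Finset.sdiff_subset (t := P))).prod_isHomogeneous
  refine IsHomogeneous.add (by simpa using hG.mul (isHomogeneous_C _ (v i))) ?_
  rcases Nat.eq_zero_or_pos (A \ P).card with h0 | hpos
  · rw [Finset.card_eq_zero.mp h0]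
    simp [applyDer, isHomogeneous_zero]
  · have hD : (applyDer (fun i => C (v i)) (∏ L ∈ A \ P, L)).IsHomogeneous ((A \ P).card - 1) :=
      IsHomogeneous.sum _ _ _ fun j _ => by simpa using (isHomogeneous_C _ (v j)).mul hG.pderiv
    have := (((isHomogeneous_C (Fin ℓ) (A.card : F)⁻¹).neg).mul hD).mul (isHomogeneous_X F i)
    rwa [zero_add, Nat.sub_add_cancel hpos] at this

lemma IsArrangement.applyDer_pencilRelation [CharZero F] (hA : IsArrangement A) (hPA : P ⊆ A)
    {v : Fin ℓ → F} (hP : ∀ L ∈ P, eval v L = 0) :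
    applyDer (pencilRelation A P v) (Qpoly A) = 0 := by
  have hR : applyDer (fun i => C (v i)) (∏ L ∈ P, L) = 0 :=
    applyDer_prod_eq_zero P id _ fun L hL => by
      simp [applyDer_C_of_isHomogeneous_one v (hA.isHomogeneous (hPA hL)), hP L hL]
  have hQ : Qpoly A = (∏ L ∈ A \ P, L) * ∏ L ∈ P, L := (Finset.prod_sdiff hPA).symm
  rcases A.eq_empty_or_nonempty with rfl | hne
  · simp [Qpoly, applyDer]
  have hcard : C (A.card : F)⁻¹ * C (A.card : F) = (1 : MvPolynomial (Fin ℓ) F) := by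
    rw [← C_mul, inv_mul_cancel₀ (by simpa using hne.ne_empty), C_1]
  rw [pencilRelation, add_applyDer, smul_applyDer, smul_applyDer,
    applyDer_X_of_isHomogeneous (f := Qpoly A) hA.prod_isHomogeneous, nsmul_eq_mul,
    ← map_natCast C, hQ, applyDer_mul, hR]
  linear_combination -(applyDer (fun i => C (v i)) (∏ L ∈ A \ P, L) *
    (∏ L ∈ A \ P, L) * ∏ L ∈ P, L) * hcard

lemma IsArrangement.pencilRelation_ne_zero [Nontrivial (Fin ℓ)] (hA : IsArrangement A)
    {v : Fin ℓ → F} (hv : v ≠ 0) : pencilRelation A P v ≠ 0 := fun h =>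
  C_mul_ne_smul_X hv (hA.mono (Finset.sdiff_subset (t := P))).prod_ne_zero _
    ((eq_neg_of_add_eq_zero_left h).trans (neg_smul _ _).symm)

lemma IsArrangement.eq_zero_of_applyDer_Qpoly_eq_zero [CharZero F] (hA : IsArrangement A)
    (hne : A.Nonempty) {r : ℕ} (h : LogDerTrivialBelow A r) {θ : Fin ℓ → MvPolynomial (Fin ℓ) F}
    (hdeg : ∀ i, θ i ≠ 0 → (θ i).totalDegree < r) (hθ : applyDer θ (Qpoly A) = 0) : θ = 0 := by
  obtain ⟨g, rfl⟩ := h θ (hA.isLogDer_of_applyDer_Qpoly_eq_zero hθ) hdeg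
  have hEuler : applyDer (g • X) (Qpoly A) = g * (A.card • Qpoly A) := by
    rw [smul_applyDer, applyDer_X_of_isHomogeneous (f := Qpoly A) hA.prod_isHomogeneous]
  have hQ : A.card • Qpoly A ≠ 0 := smul_ne_zero hne.card_ne_zero hA.prod_ne_zero
  rw [(mul_eq_zero.mp (hEuler.symm.trans hθ)).resolve_right hQ, zero_smul]

theorem IsArrangement.mdr_eq_card_sdiff [CharZero F] [Nontrivial (Fin ℓ)]
    (hA : IsArrangement A) (hPA : P ⊆ A) {v : Fin ℓ → F} (hv : v ≠ 0) (hP : ∀ L ∈ P, eval v L = 0)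
    (h : LogDerTrivialBelow A (A \ P).card) : mdr A = (A \ P).card := by
  refine IsLeast.csInf_eq ⟨⟨pencilRelation A P v, hA.pencilRelation_ne_zero hv,
    hA.pencilRelation_isHomogeneous v, hA.applyDer_pencilRelation hPA hP⟩, ?_⟩
  rintro m ⟨θ, hθ₀, hθ, hrel⟩
  by_contra! hm
  have hne : A.Nonempty := (Finset.card_pos.mp (m.zero_le.trans_lt hm)).mono Finset.sdiff_subset
  exact hθ₀ (hA.eq_zero_of_applyDer_Qpoly_eq_zero hne h
    (fun i hi => (hθ i).totalDegree hi ▸ hm) hrel)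

end MinimalDegree

section Restriction

variable {F : Type*} [Field F]

lemma totalDegree_aeval_le {σ τ : Type*} {s : σ → MvPolynomial τ F}
    (hs : ∀ i, (s i).IsHomogeneous 1) (p : MvPolynomial σ F) :
    (aeval s p).totalDegree ≤ p.totalDegree := by
  nth_rw 1 [← p.sum_homogeneousComponent, map_sum]
  refine totalDegree_finsetSum_le fun m hm => ?_
  have h := (homogeneousComponent_isHomogeneous m p).aeval s hs
  rw [one_mul] at h
  exact h.totalDegree_le.trans (Nat.lt_succ_iff.mp (Finset.mem_range.mp hm))

/-- Restriction of polynomials to the hyperplane `∑ aⱼ xⱼ = 0`, where `a i ≠ 0`: the coordinate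
`xᵢ` is eliminated and the others are renumbered. -/
noncomputable def restrict (a : Fin (ℓ + 1) → F) (i : Fin (ℓ + 1)) :
    MvPolynomial (Fin (ℓ + 1)) F →ₐ[F] MvPolynomial (Fin ℓ) F :=
  aeval (i.insertNth (linForm (-(a i)⁻¹ • i.removeNth a)) X)

variable {a : Fin (ℓ + 1) → F} {i : Fin (ℓ + 1)}

@[simp]
lemma restrict_X_self : restrict a i (X i) = linForm (-(a i)⁻¹ • i.removeNth a) := by
  simp [restrict]

@[simp]
lemma restrict_X_succAbove (j : Fin ℓ) : restrict a i (X (i.succAbove j)) = X j := by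
  simp [restrict]

@[simp]
lemma restrict_rename (p : MvPolynomial (Fin ℓ) F) :
    restrict a i (rename i.succAbove p) = p := by
  rw [restrict, aeval_rename, Fin.insertNth_comp_succAbove, aeval_X_left_apply]

lemma insertNth_restrict_isHomogeneous (j : Fin (ℓ + 1)) :
    (i.insertNth (α := fun _ => MvPolynomial (Fin ℓ) F)
      (linForm (-(a i)⁻¹ • i.removeNth a)) X j).IsHomogeneous 1 := by
  induction j using i.succAboveCases with
  | x => simpa using linForm_isHomogeneous _
  | p j => simpa using isHomogeneous_X F j

lemma restrict_isHomogeneous_one {p : MvPolynomial (Fin (ℓ + 1)) F} (hp : p.IsHomogeneous 1) :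
    (restrict a i p).IsHomogeneous 1 :=
  hp.aeval _ insertNth_restrict_isHomogeneous

lemma totalDegree_restrict_le (p : MvPolynomial (Fin (ℓ + 1)) F) :
    (restrict a i p).totalDegree ≤ p.totalDegree :=
  totalDegree_aeval_le insertNth_restrict_isHomogeneous p

lemma linForm_succAbove (b : Fin (ℓ + 1) → F) (i : Fin (ℓ + 1)) :
    linForm b = C (b i) * X i + rename i.succAbove (linForm (i.removeNth b)) := by
  simp [linForm, Fin.sum_univ_succAbove _ i, Fin.removeNth]

lemma restrict_linForm_self (ha : a i ≠ 0) : restrict a i (linForm a) = 0 := by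
  rw [linForm_succAbove a i, map_add, map_mul, restrict_rename, restrict_X_self,
    linForm_smul, algHom_C, algebraMap_eq, ← smul_eq_C_mul, smul_smul]
  simp [ha]

lemma linForm_dvd_sub_rename_restrict (ha : a i ≠ 0) (p : MvPolynomial (Fin (ℓ + 1)) F) :
    linForm a ∣ p - rename i.succAbove (restrict a i p) := by
  rw [← Ideal.mem_span_singleton, ← Ideal.Quotient.eq]
  let π := Ideal.Quotient.mkₐ F (Ideal.span {linForm a})
  suffices h : π = π.comp ((rename i.succAbove).comp (restrict a i)) from DFunLike.congr_fun h p
  refine algHom_ext fun j => Ideal.Quotient.eq.mpr (Ideal.mem_span_singleton.mpr ?_)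
  change _ ∣ X j - rename i.succAbove (restrict a i (X j))
  induction j using i.succAboveCases with
  | x =>
    have hai : C (a i) * C (a i)⁻¹ = (1 : MvPolynomial (Fin (ℓ + 1)) F) := by
      rw [← C_mul, mul_inv_cancel₀ ha, C_1]
    refine ⟨C (a i)⁻¹, ?_⟩
    rw [linForm_succAbove a i, restrict_X_self, linForm_smul, map_smul,
      smul_eq_C_mul, C_neg]
    linear_combination -X i * hai
  | p j => simp

lemma restrict_eq_zero_iff (ha : a i ≠ 0) {p : MvPolynomial (Fin (ℓ + 1)) F} :
    restrict a i p = 0 ↔ linForm a ∣ p := by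
  refine ⟨fun h => by simpa [h] using linForm_dvd_sub_rename_restrict ha p, ?_⟩
  rintro ⟨q, rfl⟩
  rw [map_mul, restrict_linForm_self ha, zero_mul]

lemma eval_restrict (ha : a i ≠ 0) {v : Fin (ℓ + 1) → F} (hv : eval v (linForm a) = 0)
    (p : MvPolynomial (Fin (ℓ + 1)) F) : eval (i.removeNth v) (restrict a i p) = eval v p := by
  obtain ⟨q, hq⟩ := linForm_dvd_sub_rename_restrict ha p
  have h := congrArg (eval v) hq
  rw [map_sub, map_mul, hv, zero_mul, eval_rename, sub_eq_zero] at h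
  exact h.symm

lemma restrict_apply_self (ha : a i ≠ 0) {θ : Fin (ℓ + 1) → MvPolynomial (Fin (ℓ + 1)) F}
    (hθ : linForm a ∣ applyDer θ (linForm a)) :
    restrict a i (θ i) = applyDer (fun j => restrict a i (θ (i.succAbove j)))
      (linForm (-(a i)⁻¹ • i.removeNth a)) := by
  have hai : C (a i) * C (a i)⁻¹ = (1 : MvPolynomial (Fin ℓ) F) := by
    rw [← C_mul, mul_inv_cancel₀ ha, C_1]
  have h := (restrict_eq_zero_iff ha).mpr hθ
  simp only [applyDer_linForm, Fin.sum_univ_succAbove _ i, map_add, map_mul, map_sum, algHom_C,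
    algebraMap_eq] at h
  have hsum : applyDer (fun j => restrict a i (θ (i.succAbove j)))
      (linForm (-(a i)⁻¹ • i.removeNth a)) =
        -C (a i)⁻¹ * ∑ j, restrict a i (θ (i.succAbove j)) * C (a (i.succAbove j)) := by
    simp [applyDer_linForm, Finset.mul_sum, Fin.removeNth, mul_left_comm]
  rw [hsum]
  linear_combination C (a i)⁻¹ * h - restrict a i (θ i) * hai

lemma restrict_applyDer (ha : a i ≠ 0) {θ : Fin (ℓ + 1) → MvPolynomial (Fin (ℓ + 1)) F}
    (hθ : linForm a ∣ applyDer θ (linForm a)) (p : MvPolynomial (Fin (ℓ + 1)) F) :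
    restrict a i (applyDer θ p) =
      applyDer (fun j => restrict a i (θ (i.succAbove j))) (restrict a i p) := by
  have hX (j : Fin (ℓ + 1)) : restrict a i (applyDer θ (X j)) =
      applyDer (fun j => restrict a i (θ (i.succAbove j))) (restrict a i (X j)) := by
    induction j using i.succAboveCases with
    | x => rw [applyDer_X, restrict_apply_self ha hθ, restrict_X_self]
    | p j => rw [applyDer_X, restrict_X_succAbove, applyDer_X]
  induction p using MvPolynomial.induction_on with
  | C c => simp [applyDer]
  | add p q hp hq => simp only [map_add, applyDer_add, hp, hq]
  | mul_X p j hp => simp only [map_mul, applyDer_mul, map_add, hp, hX]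

end Restriction

section Addition

variable {F : Type*} [Field F] [NeZero ℓ] {A : Finset (MvPolynomial (Fin (ℓ + 1)) F)}
  {a : Fin (ℓ + 1) → F} {i : Fin (ℓ + 1)} {r : ℕ}

lemma IsLogDer.restrict_eq_smul_X (ha : a i ≠ 0)
    (hR : LogDerTrivialBelow (A.image (restrict a i)) (r + 1))
    {θ : Fin (ℓ + 1) → MvPolynomial (Fin (ℓ + 1)) F} (hθ : IsLogDer (insert (linForm a) A) θ)
    (hdeg : ∀ j, θ j ≠ 0 → (θ j).totalDegree < r + 1) :
    ∃ g, (g ≠ 0 → g.totalDegree < r) ∧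
      ∀ j, restrict a i (θ j) = g * restrict a i (X j) := by
  have hα := hθ _ (Finset.mem_insert_self _ _)
  obtain ⟨g, hg⟩ := hR (fun j => restrict a i (θ (i.succAbove j)))
    (Finset.forall_mem_image.mpr fun L hL => by
      rw [← restrict_applyDer ha hα]
      exact map_dvd _ (hθ L (Finset.mem_insert_of_mem hL)))
    fun j hj => (totalDegree_restrict_le _).trans_lt (hdeg _ (ne_zero_of_map hj))
  refine ⟨g, fun hg₀ => ?_, fun j => ?_⟩
  · have h0 : restrict a i (θ (i.succAbove 0)) = g * X 0 := congrFun hg 0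
    have hne : g * (X 0 : MvPolynomial (Fin ℓ) F) ≠ 0 := mul_ne_zero hg₀ (X_ne_zero _)
    have hlt := (totalDegree_restrict_le (a := a) (i := i) _).trans_lt
      (hdeg (i.succAbove 0) (ne_zero_of_map (h0.trans_ne hne)))
    rw [h0, totalDegree_mul_of_isDomain hg₀ (X_ne_zero _), totalDegree_X] at hlt
    exact Nat.succ_lt_succ_iff.mp hlt
  · induction j using i.succAboveCases with
    | x =>
      rw [restrict_apply_self ha hα, hg, smul_applyDer, restrict_X_self,
        applyDer_X_of_isHomogeneous (linForm_isHomogeneous _), one_smul]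
    | p j => rw [restrict_X_succAbove]; exact congrFun hg j

lemma IsLogDer.exists_eq_smul_X_add_smul (ha : a i ≠ 0)
    (hR : LogDerTrivialBelow (A.image (restrict a i)) (r + 1))
    {θ : Fin (ℓ + 1) → MvPolynomial (Fin (ℓ + 1)) F} (hθ : IsLogDer (insert (linForm a) A) θ)
    (hdeg : ∀ j, θ j ≠ 0 → (θ j).totalDegree < r + 1) :
    ∃ (g : MvPolynomial (Fin (ℓ + 1)) F) (η : Fin (ℓ + 1) → MvPolynomial (Fin (ℓ + 1)) F),
      θ = g • X + linForm a • η ∧ ∀ j, η j ≠ 0 → (η j).totalDegree < r := by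
  obtain ⟨g, hgdeg, hg⟩ := hθ.restrict_eq_smul_X ha hR hdeg
  have hdvd (j) : linForm a ∣ θ j - rename i.succAbove g * X j := by
    rw [← restrict_eq_zero_iff ha, map_sub, map_mul, restrict_rename, hg, sub_self]
  choose η hη using hdvd
  refine ⟨rename i.succAbove g, η, funext fun j => ?_, fun j hj => ?_⟩
  · simpa [sub_eq_iff_eq_add'] using hη j
  have hα : linForm a ≠ 0 := mt linForm_eq_zero.mp fun h => ha (congrFun h i)
  have hθj : (θ j).totalDegree ≤ r := by
    by_cases h : θ j = 0
    · simp [h]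
    · exact Nat.lt_succ_iff.mp (hdeg j h)
  have hgj : (rename i.succAbove g * X j).totalDegree ≤ r := by
    by_cases h : g = 0
    · simp [h]
    · refine (totalDegree_mul _ _).trans ?_
      rw [totalDegree_X]
      exact (totalDegree_rename_le _ g).trans_lt (hgdeg h)
  have hle := (totalDegree_sub _ _).trans (max_le hθj hgj)
  rw [hη j, totalDegree_mul_of_isDomain hα hj,
    (linForm_isHomogeneous a).totalDegree hα, add_comm] at hle
  exact hle

theorem LogDerTrivialBelow.insert_linForm (hA : LogDerTrivialBelow A r)
    (hins : IsArrangement (insert (linForm a) A)) (hmem : linForm a ∉ A) (ha : a i ≠ 0)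
    (hR : LogDerTrivialBelow (A.image (restrict a i)) (r + 1)) :
    LogDerTrivialBelow (insert (linForm a) A) (r + 1) := by
  intro θ hθ hdeg
  obtain ⟨g, η, rfl, hηdeg⟩ := hθ.exists_eq_smul_X_add_smul ha hR hdeg
  have hη : IsLogDer A η := fun L hL => by
    have hL' : L ∈ insert (linForm a) A := Finset.mem_insert_of_mem hL
    have hdvd := hθ L hL'
    rw [add_applyDer, smul_applyDer, smul_applyDer,
      applyDer_X_of_isHomogeneous (hins.isHomogeneous hL'), one_smul,
      dvd_add_right (dvd_mul_left L g)] at hdvd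
    refine ((hins.prime hL').dvd_or_dvd hdvd).resolve_left ?_
    exact hins.not_dvd hL' (Finset.mem_insert_self _ _) (ne_of_mem_of_not_mem hL hmem)
  obtain ⟨h, rfl⟩ := hA η hη hηdeg
  exact ⟨g + linForm a * h, by rw [add_smul, mul_smul]⟩

end Addition

section BinaryForms

variable {F : Type*} [Field F] {B : Finset (MvPolynomial (Fin 2) F)} {r : ℕ}

lemma IsLogDer.prod_dvd_wedge (hB : IsArrangement B) {θ : Fin 2 → MvPolynomial (Fin 2) F}
    (hθ : IsLogDer B θ) : ∏ L ∈ B, L ∣ X 0 * θ 1 - X 1 * θ 0 := by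
  refine hB.prod_dvd fun L hL => ?_
  obtain ⟨b, rfl⟩ := exists_eq_linForm (hB.isHomogeneous hL)
  obtain ⟨q, hq⟩ := hθ _ hL
  have hb : b ≠ 0 := mt linForm_eq_zero.mpr (hB.ne_zero hL)
  rw [applyDer_linForm, linForm, Fin.sum_univ_two, Fin.sum_univ_two] at hq
  have key (j : Fin 2) : linForm b ∣ C (b j) * (X 0 * θ 1 - X 1 * θ 0) := by
    rw [linForm, Fin.sum_univ_two]
    match j with
    | 0 => exact ⟨θ 1 - X 1 * q, by linear_combination -X 1 * hq⟩
    | 1 => exact ⟨X 0 * q - θ 0, by linear_combination X 0 * hq⟩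
  obtain ⟨j, hj⟩ := Function.ne_iff.mp hb
  exact (IsUnit.map C (Ne.isUnit hj)).dvd_mul_left.mp (key j)

theorem IsArrangement.logDerTrivialBelow_of_lt_card (hB : IsArrangement B) (hr : r < B.card) :
    LogDerTrivialBelow B r := by
  intro θ hθ hdeg
  have hmul (i j : Fin 2) : (X i * θ j).totalDegree ≤ r := by
    by_cases h : θ j = 0
    · simp [h]
    · rw [totalDegree_mul_of_isDomain (X_ne_zero i) h, totalDegree_X, add_comm]
      exact hdeg j h
  have hwedge : X 0 * θ 1 - X 1 * θ 0 = 0 := by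
    by_contra hne
    have hle := (totalDegree_le_of_dvd_of_isDomain (hθ.prod_dvd_wedge hB) hne).trans
      ((totalDegree_sub _ _).trans (max_le (hmul 0 1) (hmul 1 0)))
    rw [hB.prod_isHomogeneous.totalDegree hB.prod_ne_zero] at hle
    exact hr.not_ge hle
  obtain ⟨g, hg⟩ : (X 0 : MvPolynomial (Fin 2) F) ∣ θ 0 := by
    have h : X 0 ∣ X 1 * θ 0 := ⟨θ 1, (sub_eq_zero.mp hwedge).symm⟩
    exact (X_prime.dvd_or_dvd h).resolve_left (by simp [X_dvd_X])
  have hg₁ : θ 1 = X 1 * g :=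
    mul_left_cancel₀ (X_ne_zero 0) (by linear_combination hwedge + X 1 * hg)
  refine ⟨g, funext fun j => ?_⟩
  match j with
  | 0 => simpa [mul_comm] using hg
  | 1 => simpa [mul_comm] using hg₁

end BinaryForms

section Traces

variable {F : Type*} [Field F]

/-- The trace of the hyperplane `L` on `H`: the subspaces counted by `restCard`. -/
def trace (H L : MvPolynomial (Fin ℓ) F) : Set (Fin ℓ → F) :=
  {v | eval v H = 0 ∧ eval v L = 0}

lemma restCard_eq_card_image_trace {A : Finset (MvPolynomial (Fin ℓ) F)}
    {H : MvPolynomial (Fin ℓ) F} (hH : H ∉ A) : restCard A H = (A.image (trace H)).card := by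
  rw [restCard, Finset.erase_eq_of_notMem hH]
  rfl

variable {A : Finset (MvPolynomial (Fin (ℓ + 1)) F)} {a : Fin (ℓ + 1) → F} {i : Fin (ℓ + 1)}

lemma trace_eq_of_restrict_eq_smul (ha : a i ≠ 0) {L M : MvPolynomial (Fin (ℓ + 1)) F} {c : F}
    (hc : c ≠ 0) (h : restrict a i L = c • restrict a i M) :
    trace (linForm a) L = trace (linForm a) M := by
  ext v
  refine and_congr_right fun hv => ?_
  rw [← eval_restrict ha hv, h, smul_eval, mul_eq_zero, or_iff_right hc, eval_restrict ha hv]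

lemma IsArrangement.exists_subset_image_restrict (ha : a i ≠ 0)
    (hA : IsArrangement (insert (linForm a) A)) (hH : linForm a ∉ A) :
    ∃ B ⊆ A.image (restrict a i), IsArrangement B ∧ B.card = restCard A (linForm a) := by
  have hne {L} (hL : L ∈ A) : restrict a i L ≠ 0 := fun h =>
    hA.not_dvd (Finset.mem_insert_self _ _) (Finset.mem_insert_of_mem hL)
      (ne_of_mem_of_not_mem hL hH).symm ((restrict_eq_zero_iff ha).mp h)
  obtain ⟨S, hSA, hinj, himage⟩ :=
    Finset.exists_subset_injOn_image_eq_of_surjOn A (A.image (trace (linForm a)))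
      (by rw [Finset.coe_image]; exact Set.surjOn_image _ _)
  have hprop {L M} (hL : L ∈ S) (hM : M ∈ S) {c : F} (h : restrict a i L = c • restrict a i M) :
      L = M := by
    refine hinj hL hM (trace_eq_of_restrict_eq_smul ha ?_ h)
    rintro rfl
    exact hne (hSA hL) (by rw [h, zero_smul])
  refine ⟨S.image (restrict a i), Finset.image_subset_image hSA, ⟨?_, ?_⟩, ?_⟩
  · refine Finset.forall_mem_image.mpr fun L hL => ⟨hne (hSA hL), ?_⟩
    exact restrict_isHomogeneous_one (hA.isHomogeneous (Finset.mem_insert_of_mem (hSA hL)))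
  · simp only [Finset.forall_mem_image]
    exact fun L hL M hM hLM c h => hLM (by rw [hprop hL hM h])
  · rw [Finset.card_image_of_injOn fun L hL M hM h => hprop hL hM (c := 1) (by simpa using h),
      restCard_eq_card_image_trace hH, ← himage, Finset.card_image_of_injOn hinj]

theorem LogDerTrivialBelow.insert {A : Finset (MvPolynomial (Fin 3) F)}
    {H : MvPolynomial (Fin 3) F} {r : ℕ} (h : LogDerTrivialBelow A r)
    (hA : IsArrangement (insert H A)) (hH : H ∉ A) (hr : r + 2 ≤ restCard A H) :
    LogDerTrivialBelow (insert H A) (r + 1) := by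
  obtain ⟨a, rfl⟩ := exists_eq_linForm (hA.isHomogeneous (Finset.mem_insert_self _ _))
  have ha : a ≠ 0 := mt linForm_eq_zero.mpr (hA.ne_zero (Finset.mem_insert_self _ _))
  obtain ⟨i, hi⟩ := Function.ne_iff.mp ha
  obtain ⟨B, hBsub, hB, hcard⟩ := hA.exists_subset_image_restrict hi hH
  exact h.insert_linForm hA hH hi ((hB.logDerTrivialBelow_of_lt_card (by omega)).mono hBsub)

end Traces

section ProjectivePlane

open scoped Matrix

variable {F : Type*} [Field F]

lemma mem_trace_linForm {a b v : Fin ℓ → F} :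
    v ∈ trace (linForm a) (linForm b) ↔ a ⬝ᵥ v = 0 ∧ b ⬝ᵥ v = 0 := by
  simp [trace]

lemma trace_linForm_eq_span_cross {a b : Fin 3 → F} (hab : a ⨯₃ b ≠ 0) :
    trace (linForm a) (linForm b) = Submodule.span F {a ⨯₃ b} := by
  ext w
  rw [SetLike.mem_coe, Submodule.mem_span_singleton]
  constructor
  · intro hw
    obtain ⟨haw, hbw⟩ := mem_trace_linForm.mp hw
    by_contra! hne
    have hli := (LinearIndependent.pair_iff' hab).mpr hne
    refine crossProduct_ne_zero_iff_linearIndependent.mpr hli ?_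
    rw [cross_cross_eq_smul_sub_smul, haw, hbw, zero_smul, zero_smul, sub_zero]
  · rintro ⟨c, rfl⟩
    simp [mem_trace_linForm]

variable {A : Finset (MvPolynomial (Fin 3) F)} {H L M : MvPolynomial (Fin 3) F}

lemma cross_ne_zero_of_ne_smul {a b : Fin 3 → F} (ha : a ≠ 0)
    (hab : ∀ c : F, linForm b ≠ c • linForm a) : a ⨯₃ b ≠ 0 :=
  crossProduct_ne_zero_iff_linearIndependent.mpr <| (LinearIndependent.pair_iff' ha).mpr
    fun c hc => hab c (hc ▸ linForm_smul c a)

lemma IsArrangement.exists_trace_eq_span (hA : IsArrangement A) (hH : H ∈ A) (hL : L ∈ A)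
    (hne : H ≠ L) : ∃ v : Fin 3 → F, v ≠ 0 ∧ trace H L = Submodule.span F {v} := by
  obtain ⟨a, rfl⟩ := exists_eq_linForm (hA.isHomogeneous hH)
  obtain ⟨b, rfl⟩ := exists_eq_linForm (hA.isHomogeneous hL)
  have hab := cross_ne_zero_of_ne_smul (mt linForm_eq_zero.mpr (hA.ne_zero hH))
    (hA.2 _ hL _ hH hne.symm)
  exact ⟨_, hab, trace_linForm_eq_span_cross hab⟩

lemma IsArrangement.trace_eq_span (hA : IsArrangement A) (hH : H ∈ A) (hL : L ∈ A) (hne : H ≠ L)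
    {v : Fin 3 → F} (hv : v ≠ 0) (hmem : v ∈ trace H L) : trace H L = Submodule.span F {v} := by
  obtain ⟨w, -, hw⟩ := hA.exists_trace_eq_span hH hL hne
  rw [hw] at hmem ⊢
  obtain ⟨c, rfl⟩ := Submodule.mem_span_singleton.mp hmem
  rw [Submodule.span_singleton_smul_eq (IsUnit.mk0 c (left_ne_zero_of_smul hv))]

lemma IsArrangement.trace_eq_trace_iff (hA : IsArrangement A) (hH : H ∈ A) (hL : L ∈ A)
    (hM : M ∈ A) (hHL : H ≠ L) (hHM : H ≠ M) {v : Fin 3 → F} (hv : v ≠ 0) (hmem : v ∈ trace H L) :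
    trace H M = trace H L ↔ eval v M = 0 := by
  refine ⟨fun h => (h ▸ hmem : v ∈ trace H M).2, fun h => ?_⟩
  rw [hA.trace_eq_span hH hL hHL hv hmem, hA.trace_eq_span hH hM hHM hv ⟨hmem.1, h⟩]

end ProjectivePlane

section Pencils

variable {F : Type*} [Field F] {A : Finset (MvPolynomial (Fin ℓ) F)}

/-- The sets of members of `A` passing through a point of `S`, as in `nPoints`, but without the
condition that there are at least two such members. -/
noncomputable def pencils (A : Finset (MvPolynomial (Fin ℓ) F)) (S : Set (Fin ℓ → F)) :
    Finset (Finset (MvPolynomial (Fin ℓ) F)) :=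
  A.powerset.filter fun T => ∃ v ∈ S, v ≠ 0 ∧ T = A.filter fun L => eval v L = 0

lemma mem_pencils {S : Set (Fin ℓ → F)} {T : Finset (MvPolynomial (Fin ℓ) F)} :
    T ∈ pencils A S ↔ ∃ v ∈ S, v ≠ 0 ∧ T = A.filter fun L => eval v L = 0 := by
  rw [pencils, Finset.mem_filter, and_iff_right_iff_imp, Finset.mem_powerset]
  rintro ⟨v, -, -, rfl⟩
  exact Finset.filter_subset _ _

lemma pencils_union (S S' : Set (Fin ℓ → F)) :
    pencils A (S ∪ S') = pencils A S ∪ pencils A S' := by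
  ext T
  simp only [mem_pencils, Finset.mem_union, Set.mem_union, or_and_right, exists_or]

lemma pencils_insert_of_forall_eq_zero {S : Set (Fin ℓ → F)} {H : MvPolynomial (Fin ℓ) F}
    (hS : ∀ v ∈ S, eval v H = 0) : pencils (insert H A) S = (pencils A S).image (insert H) := by
  ext T
  simp only [Finset.mem_image, mem_pencils]
  constructor
  · rintro ⟨v, hv, hv₀, rfl⟩
    exact ⟨_, ⟨v, hv, hv₀, rfl⟩, by rw [Finset.filter_insert, if_pos (hS v hv)]⟩
  · rintro ⟨_, ⟨v, hv, hv₀, rfl⟩, rfl⟩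
    exact ⟨v, hv, hv₀, by rw [Finset.filter_insert, if_pos (hS v hv)]⟩

lemma pencils_insert_of_forall_ne_zero {S : Set (Fin ℓ → F)} {H : MvPolynomial (Fin ℓ) F}
    (hS : ∀ v ∈ S, eval v H ≠ 0) : pencils (insert H A) S = pencils A S := by
  ext T
  simp only [mem_pencils]
  refine exists_congr fun v => and_congr_right fun hv => ?_
  rw [Finset.filter_insert, if_neg (hS v hv)]

lemma subset_of_mem_pencils {S : Set (Fin ℓ → F)} {T : Finset (MvPolynomial (Fin ℓ) F)}
    (hT : T ∈ pencils A S) : T ⊆ A :=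
  Finset.mem_powerset.mp (Finset.mem_filter.mp hT).1

end Pencils

section Tjurina

variable {F : Type*} [Field F] {A : Finset (MvPolynomial (Fin 3) F)} {H : MvPolynomial (Fin 3) F}

lemma nPoints_eq_card_filter_pencils {j : ℕ} (hj : 2 ≤ j) :
    nPoints A j = ((pencils A Set.univ).filter fun T => T.card = j).card := by
  rw [nPoints, ← Set.ncard_coe_finset]
  congr 1
  ext T
  simp only [Set.mem_ofPred_eq, Finset.coe_filter, mem_pencils, Set.mem_univ, true_and]
  constructor
  · rintro ⟨v, hv, hT, -, hcard⟩
    exact ⟨⟨v, hv, hT⟩, hcard⟩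
  · rintro ⟨⟨v, hv, hT⟩, hcard⟩
    exact ⟨v, hv, hT, hj.trans_eq hcard.symm, hcard⟩

lemma tjurina_eq_sum_pencils (A : Finset (MvPolynomial (Fin 3) F)) :
    tjurina A = ∑ T ∈ pencils A Set.univ, (T.card - 1) ^ 2 := by
  have hmaps : ∀ T ∈ pencils A Set.univ, T.card ∈ Finset.range (A.card + 1) := fun T hT =>
    Finset.mem_range_succ_iff.mpr (Finset.card_le_card (subset_of_mem_pencils hT))
  rw [tjurina, ← Finset.sum_fiberwise_of_maps_to hmaps]
  refine Finset.sum_congr rfl fun j _ => ?_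
  rw [Finset.sum_congr rfl fun T hT => by rw [(Finset.mem_filter.mp hT).2], Finset.sum_const,
    smul_eq_mul]
  obtain hj | hj := lt_or_ge j 2
  · simp [Nat.sub_eq_zero_of_le (Nat.lt_succ_iff.mp hj)]
  · rw [nPoints_eq_card_filter_pencils hj]

lemma sum_pencils_eq_sum_trace (hA : IsArrangement (insert H A)) (hH : H ∉ A) (f : ℕ → ℕ)
    (hf : f 0 = 0) :
    ∑ T ∈ pencils A {v | eval v H = 0}, f T.card =
      ∑ t ∈ A.image (trace H), f (A.filter fun L => trace H L = t).card := by
  have hfilter {L v} (hL : L ∈ A) (hv : v ≠ 0) (hmem : v ∈ trace H L) :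
      A.filter (fun M => trace H M = trace H L) = A.filter fun M => eval v M = 0 :=
    Finset.filter_congr fun M hM =>
      hA.trace_eq_trace_iff (Finset.mem_insert_self _ _) (Finset.mem_insert_of_mem hL)
        (Finset.mem_insert_of_mem hM) (ne_of_mem_of_not_mem hL hH).symm
        (ne_of_mem_of_not_mem hM hH).symm hv hmem
  symm
  refine Finset.sum_of_injOn (fun t => A.filter fun L => trace H L = t) ?_ ?_ ?_ fun _ _ => rfl
  · simp only [Finset.coe_image, Set.InjOn, Set.forall_mem_image, Finset.mem_coe]
    intro L hL M _ h
    have hmem : L ∈ A.filter fun N => trace H N = trace H M :=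
      h ▸ Finset.mem_filter.mpr ⟨hL, rfl⟩
    exact (Finset.mem_filter.mp hmem).2
  · simp only [Finset.coe_image, Set.MapsTo, Set.forall_mem_image, Finset.mem_coe, mem_pencils]
    intro L hL
    obtain ⟨v, hv, htrace⟩ := hA.exists_trace_eq_span (Finset.mem_insert_self _ _)
      (Finset.mem_insert_of_mem hL) (ne_of_mem_of_not_mem hL hH).symm
    have hmem : v ∈ trace H L := htrace ▸ Submodule.mem_span_singleton_self v
    exact ⟨v, hmem.1, hv, hfilter hL hv hmem⟩
  · intro T hT hnotMem
    obtain ⟨v, hvH, hv, rfl⟩ := mem_pencils.mp hT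
    suffices h : (A.filter fun L => eval v L = 0) = ∅ by rw [h, Finset.card_empty, hf]
    refine Finset.filter_eq_empty_iff.mpr fun L hL hvL => hnotMem ?_
    exact ⟨trace H L, Finset.mem_image_of_mem _ hL, hfilter hL hv ⟨hvH, hvL⟩⟩

lemma card_le_one_of_mem_pencils (hA : IsArrangement A) (hH : H.IsHomogeneous 1)
    {T : Finset (MvPolynomial (Fin 3) F)} (h₀ : T ∈ pencils A {v | eval v H = 0})
    (h₁ : T ∈ pencils A {v | eval v H ≠ 0}) : T.card ≤ 1 := by
  obtain ⟨v, hvH, hv, rfl⟩ := mem_pencils.mp h₀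
  obtain ⟨w, hwH, -, hT⟩ := mem_pencils.mp h₁
  refine Finset.card_le_one.mpr fun L hL M hM => by_contra fun hLM => hwH ?_
  obtain ⟨hLA, hvL⟩ := Finset.mem_filter.mp hL
  obtain ⟨hMA, hvM⟩ := Finset.mem_filter.mp hM
  have hw : w ∈ trace L M := by
    rw [hT] at hL hM
    exact ⟨(Finset.mem_filter.mp hL).2, (Finset.mem_filter.mp hM).2⟩
  rw [hA.trace_eq_span hLA hMA hLM hv ⟨hvL, hvM⟩] at hw
  obtain ⟨c, rfl⟩ := Submodule.mem_span_singleton.mp hw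
  rw [eval_smul_of_isHomogeneous hH, hvH, mul_zero]

lemma tjurina_eq_sum_add_sum (hA : IsArrangement A) (hH : H.IsHomogeneous 1) :
    tjurina A = ∑ T ∈ pencils A {v | eval v H = 0}, (T.card - 1) ^ 2 +
      ∑ T ∈ pencils A {v | eval v H ≠ 0}, (T.card - 1) ^ 2 := by
  have hunion : (Set.univ : Set (Fin 3 → F)) = {v | eval v H = 0} ∪ {v | eval v H ≠ 0} :=
    (Set.union_compl_self {v | eval v H = 0}).symm
  rw [tjurina_eq_sum_pencils, hunion, pencils_union, ← Finset.sum_union_inter, left_eq_add]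
  refine Finset.sum_eq_zero fun T hT => ?_
  obtain ⟨h₀, h₁⟩ := Finset.mem_inter.mp hT
  rw [Nat.sub_eq_zero_of_le (card_le_one_of_mem_pencils hA hH h₀ h₁), zero_pow two_ne_zero]

lemma sum_pencils_insert (hH : H ∉ A) :
    ∑ T ∈ pencils (insert H A) {v | eval v H = 0}, (T.card - 1) ^ 2 =
      ∑ T ∈ pencils A {v | eval v H = 0}, T.card ^ 2 := by
  have hnotMem {T} (hT : T ∈ pencils A {v | eval v H = 0}) : H ∉ T :=
    fun h => hH (subset_of_mem_pencils hT h)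
  rw [pencils_insert_of_forall_eq_zero (S := {v | eval v H = 0}) fun v hv => hv,
    Finset.sum_image fun T hT T' hT' h => by
    rw [← Finset.erase_insert (hnotMem hT), h, Finset.erase_insert (hnotMem hT')]]
  refine Finset.sum_congr rfl fun T hT => ?_
  rw [Finset.card_insert_of_notMem (hnotMem hT), Nat.add_sub_cancel]

theorem IsArrangement.tjurina_insert_add_restCard (hA : IsArrangement (insert H A)) (hH : H ∉ A) :
    tjurina (insert H A) + restCard A H = tjurina A + 2 * A.card := by
  have hdeg := hA.isHomogeneous (Finset.mem_insert_self H A)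
  rw [tjurina_eq_sum_add_sum hA hdeg, sum_pencils_insert hH,
    pencils_insert_of_forall_ne_zero (S := {v | eval v H ≠ 0}) fun v hv => hv,
    tjurina_eq_sum_add_sum (hA.mono (Finset.subset_insert H A)) hdeg,
    sum_pencils_eq_sum_trace hA hH (fun m => m ^ 2) rfl,
    sum_pencils_eq_sum_trace hA hH (fun m => (m - 1) ^ 2) rfl, restCard_eq_card_image_trace hH,
    Finset.card_eq_sum_card_image (trace H) A, Finset.card_eq_sum_ones, Finset.mul_sum]
  -- A point of `H` on `m ≥ 1` lines of `A` contributes `(m - 1) ^ 2` before and `m ^ 2` after.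
  have hpoints : ∑ t ∈ A.image (trace H), ((A.filter fun L => trace H L = t).card ^ 2 + 1) =
      ∑ t ∈ A.image (trace H), (((A.filter fun L => trace H L = t).card - 1) ^ 2 +
        2 * (A.filter fun L => trace H L = t).card) := by
    refine Finset.sum_congr rfl fun t ht => ?_
    obtain ⟨L, hL, rfl⟩ := Finset.mem_image.mp ht
    have hpos : 0 < (A.filter fun M => trace H M = trace H L).card :=
      Finset.card_pos.mpr ⟨L, Finset.mem_filter.mpr ⟨hL, rfl⟩⟩
    obtain ⟨m, hm⟩ := Nat.exists_eq_add_one_of_ne_zero hpos.ne'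
    rw [hm, Nat.add_sub_cancel]
    ring
  rw [Finset.sum_add_distrib, Finset.sum_add_distrib] at hpoints
  omega

end Tjurina

section Extremal

variable {F : Type*} [Field F] {A P : Finset (MvPolynomial (Fin 3) F)}
  {H : MvPolynomial (Fin 3) F} {e c : ℕ}

/-- The induction invariant: `A` has the number of lines and the Tjurina number of a maximal
Tjurina arrangement of type `(2 * e + 1 + c, e + c)`, and no nontrivial logarithmic derivation of
degree less than `e + c`. The subtraction in `tauMax` is avoided, so that `c = 0` is meaningful. -/
structure IsExtremal (A : Finset (MvPolynomial (Fin 3) F)) (e c : ℕ) : Prop where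
  card_eq : A.card = 2 * e + 1 + c
  logDerTrivialBelow : LogDerTrivialBelow A (e + c)
  tjurina_add_choose : tjurina A + (c + 1).choose 2 = (2 * e + c) * e + (e + c) ^ 2

theorem IsExtremal.insert (h : IsExtremal A e c) (hA : IsArrangement (insert H A)) (hH : H ∉ A)
    (hcard : restCard A H = e + c + 2) : IsExtremal (insert H A) e (c + 1) where
  card_eq := by rw [Finset.card_insert_of_notMem hH, h.card_eq, add_assoc _ c 1]
  logDerTrivialBelow := h.logDerTrivialBelow.insert hA hH hcard.ge
  tjurina_add_choose := by
    have hτ := hA.tjurina_insert_add_restCard hH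
    have hchoose : (c + 1 + 1).choose 2 = c + 1 + (c + 1).choose 2 := by
      rw [Nat.choose_succ_succ' (c + 1) 1, Nat.choose_one_right]
    have hold := h.tjurina_add_choose
    rw [hcard, h.card_eq] at hτ
    rw [hchoose]
    linarith

theorem IsExtremal.isMaxTjurina [CharZero F] (h : IsExtremal A e c) (hc : 1 ≤ c)
    (hA : IsArrangement A) (hPA : P ⊆ A) (hcard : P.card = e + 1) {v : Fin 3 → F} (hv : v ≠ 0)
    (hP : ∀ L ∈ P, eval v L = 0) : IsMaxTjurina A (2 * e + 1 + c) (e + c) := by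
  have hsdiff : (A \ P).card = e + c := by
    rw [Finset.card_sdiff_of_subset hPA, h.card_eq, hcard]
    omega
  refine ⟨h.card_eq, ?_, ?_⟩
  · rw [← hsdiff]
    exact hA.mdr_eq_card_sdiff hPA hv hP (hsdiff.symm ▸ h.logDerTrivialBelow)
  · rw [tauMax, show 2 * e + 1 + c - 1 = 2 * e + c by omega,
      show 2 * e + 1 + c - (e + c) - 1 = e by omega,
      show 2 * (e + c) - (2 * e + 1 + c) + 2 = c + 1 by omega, ← h.tjurina_add_choose,
      Nat.add_sub_cancel]

end Extremal

section GridLines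

open scoped Matrix

/-- The lines of the construction, in the affine chart `z = 1`: the line at infinity, `x = n`,
`y = n`, `x - y = n` and `x + y = n`. -/
inductive GridLine
  | infinity
  | vertical (n : ℕ)
  | horizontal (n : ℕ)
  | diagonal (n : ℕ)
  | antidiagonal (n : ℕ)

namespace GridLine

/-- The coefficients of the equation of a line in homogeneous coordinates. -/
def coeff : GridLine → Fin 3 → ℤ
  | infinity => ![0, 0, 1]
  | vertical n => ![1, 0, -n]
  | horizontal n => ![0, 1, -n]
  | diagonal n => ![1, -1, -n]
  | antidiagonal n => ![1, 1, -n]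

/-- The third line passes through the intersection point of the first two. -/
def Concurrent (H L M : GridLine) : Prop := coeff M ⬝ᵥ coeff H ⨯₃ coeff L = 0

lemma concurrent_iff {H L M : GridLine} : Concurrent H L M ↔
    coeff M 0 * (coeff H 1 * coeff L 2 - coeff H 2 * coeff L 1) +
      coeff M 1 * (coeff H 2 * coeff L 0 - coeff H 0 * coeff L 2) +
      coeff M 2 * (coeff H 0 * coeff L 1 - coeff H 1 * coeff L 0) = 0 := by
  rw [Concurrent, cross_apply, Matrix.vec3_dotProduct]
  rfl

lemma cross_coeff_ne_zero {L M : GridLine} (h : L ≠ M) : coeff L ⨯₃ coeff M ≠ 0 := by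
  cases L <;> cases M <;> simp [coeff, cross_apply] <;> grind

/-- The line at infinity together with the vertical lines `x = n` for `n ∈ V`, the horizontal lines
`y = n` for `n ∈ W`, the diagonals `x - y = n` for `n ∈ D` and the antidiagonals `x + y = n` for
`n ∈ E`. -/
noncomputable def family (V W D E : Finset ℕ) : Finset GridLine :=
  insert infinity
    (V.image vertical ∪ W.image horizontal ∪ D.image diagonal ∪ E.image antidiagonal)

variable {V W D E : Finset ℕ} {n : ℕ}

@[simp] lemma infinity_mem_family : infinity ∈ family V W D E := by simp [family]

@[simp] lemma vertical_mem_family : vertical n ∈ family V W D E ↔ n ∈ V := by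
  simp [family]

@[simp] lemma horizontal_mem_family : horizontal n ∈ family V W D E ↔ n ∈ W := by
  simp [family]

@[simp] lemma diagonal_mem_family : diagonal n ∈ family V W D E ↔ n ∈ D := by
  simp [family]

@[simp] lemma antidiagonal_mem_family : antidiagonal n ∈ family V W D E ↔ n ∈ E := by
  simp [family]

lemma family_insert_vertical :
    family (insert n V) W D E = insert (vertical n) (family V W D E) := by
  ext L; cases L <;> simp

lemma family_insert_horizontal :
    family V (insert n W) D E = insert (horizontal n) (family V W D E) := by
  ext L; cases L <;> simp

lemma family_insert_diagonal :
    family V W (insert n D) E = insert (diagonal n) (family V W D E) := by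
  ext L; cases L <;> simp

lemma family_insert_antidiagonal :
    family V W D (insert n E) = insert (antidiagonal n) (family V W D E) := by
  ext L; cases L <;> simp

lemma card_family (V W D E : Finset ℕ) :
    (family V W D E).card = 1 + V.card + W.card + D.card + E.card := by
  rw [family, Finset.card_insert_of_notMem (by simp), Finset.card_union_of_disjoint,
    Finset.card_union_of_disjoint, Finset.card_union_of_disjoint,
    Finset.card_image_of_injective, Finset.card_image_of_injective,
    Finset.card_image_of_injective, Finset.card_image_of_injective]
  · omega
  all_goals first
    | exact fun m n h => by injection h
    | exact Finset.disjoint_left.mpr fun L hL hL' => by cases L <;> simp at hL hL'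

/-- `S ⊆ T` contains exactly one line through each of the points in which the lines of `T` meet
`H`. -/
structure IsTransversal (H : GridLine) (T S : Finset GridLine) : Prop where
  subset : S ⊆ T
  eq_of_concurrent : ∀ L ∈ S, ∀ M ∈ S, Concurrent H L M → L = M
  exists_concurrent : ∀ L ∈ T, ∃ M ∈ S, Concurrent H L M

lemma isTransversal_horizontal :
    IsTransversal (horizontal n) (family V W ∅ ∅) (family V ∅ ∅ ∅) where
  subset L hL := by cases L <;> grind [family]
  eq_of_concurrent L hL M hM h := by
    rw [concurrent_iff] at h
    cases L <;> cases M <;> simp only [coeff, Matrix.cons_val] at h <;> grind [family]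
  exists_concurrent L hL := by
    simp only [concurrent_iff]
    rcases L with _ | k | k | k | k
    · exact ⟨infinity, by simp, by simp [coeff]⟩
    · exact ⟨vertical k, by simpa using hL, by simp [coeff]⟩
    · exact ⟨infinity, by simp, by simp [coeff]⟩
    · simp at hL
    · simp at hL

lemma isTransversal_vertical :
    IsTransversal (vertical n) (family V W ∅ ∅) (family ∅ W ∅ ∅) where
  subset L hL := by cases L <;> grind [family]
  eq_of_concurrent L hL M hM h := by
    rw [concurrent_iff] at h
    cases L <;> cases M <;> simp only [coeff, Matrix.cons_val] at h <;> grind [family]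
  exists_concurrent L hL := by
    simp only [concurrent_iff]
    rcases L with _ | k | k | k | k
    · exact ⟨infinity, by simp, by simp [coeff]⟩
    · exact ⟨infinity, by simp, by simp [coeff]⟩
    · exact ⟨horizontal k, by simpa using hL, by simp [coeff]⟩
    · simp at hL
    · simp at hL

lemma isTransversal_diagonal {e : ℕ} (hn : n ≤ e) :
    IsTransversal (diagonal n) (family (Finset.range e) (Finset.range e) D ∅)
      (family (Finset.range n) (Finset.range e) ∅ ∅) where
  subset L hL := by cases L <;> grind [family]
  eq_of_concurrent L hL M hM h := by
    rw [concurrent_iff] at h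
    cases L <;> cases M <;> simp only [coeff, Matrix.cons_val] at h <;> grind [family]
  exists_concurrent L hL := by
    simp only [concurrent_iff]
    rcases L with _ | k | k | k | k
    · exact ⟨infinity, by simp, by simp [coeff]⟩
    · obtain hk | hk := lt_or_ge k n
      · exact ⟨vertical k, by simpa using hk, by simp [coeff]⟩
      · exact ⟨horizontal (k - n), by grind [family], by simp only [coeff, Matrix.cons_val]; omega⟩
    · exact ⟨horizontal k, by simpa using hL, by simp [coeff]⟩
    · exact ⟨infinity, by simp, by simp [coeff]⟩
    · simp at hL

lemma isTransversal_antidiagonal {e s : ℕ} (hes : e ≤ s) (hse : s ≤ 3 * e) :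
    IsTransversal (antidiagonal s) (family (Finset.range e) (Finset.range e) (Finset.Icc 1 e) E)
      (family (Finset.range (min e (s / 2 + 1))) (Finset.range ((s - e + 1) / 2))
        (Finset.Icc 1 e) ∅) where
  subset L hL := by cases L <;> grind [family]
  eq_of_concurrent L hL M hM h := by
    rw [concurrent_iff] at h
    cases L <;> cases M <;> simp only [coeff, Matrix.cons_val] at h <;> grind [family]
  exists_concurrent L hL := by
    -- At the intersection point of `x + y = s` with the line `x = k`, `y = k` or `x - y = k`, the
    -- function `x - y` takes the value `2 * k - s`, `s - 2 * k` or `k`, respectively.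
    simp only [concurrent_iff]
    rcases L with _ | k | k | k | k
    · exact ⟨infinity, by simp, by simp [coeff]⟩
    · have hke : k < e := by simpa using hL
      obtain hk | hk := le_or_gt (2 * k) s
      · exact ⟨vertical k, by grind [family], by simp [coeff]⟩
      · exact ⟨diagonal (2 * k - s), by grind [family],
          by simp only [coeff, Matrix.cons_val]; omega⟩
    · have hke : k < e := by simpa using hL
      obtain hk | hk := lt_or_ge (2 * k + e) s
      · exact ⟨horizontal k, by grind [family], by simp [coeff]⟩
      · obtain hk' | hk' := lt_or_ge (2 * k) s
        · exact ⟨diagonal (s - 2 * k), by grind [family],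
            by simp only [coeff, Matrix.cons_val]; omega⟩
        · exact ⟨vertical (s - k), by grind [family], by simp only [coeff, Matrix.cons_val]; omega⟩
    · exact ⟨diagonal k, by simpa using hL, by simp only [coeff, Matrix.cons_val]; omega⟩
    · exact ⟨infinity, by simp, by simp [coeff]⟩

end GridLine

end GridLines

section GridArrangements

open scoped Matrix

variable {F : Type*} [Field F]

namespace GridLine

/-- The linear form over `F` with the coefficients of `L`. -/
noncomputable def lineForm (F : Type*) [Field F] (L : GridLine) : MvPolynomial (Fin 3) F :=
  linForm fun i => (coeff L i : F)

lemma eval_lineForm_intCast (L : GridLine) (v : Fin 3 → ℤ) :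
    eval (fun i => (v i : F)) (lineForm F L) = ((coeff L ⬝ᵥ v : ℤ) : F) := by
  simp [lineForm, dotProduct]

/-- The arrangement over `F` formed by the lines in `T`. -/
noncomputable def arrangement (F : Type*) [Field F] (T : Finset GridLine) :
    Finset (MvPolynomial (Fin 3) F) :=
  T.image (lineForm F)

variable {T S : Finset GridLine} {H L M : GridLine}

lemma arrangement_insert :
    arrangement F (insert H T) = insert (lineForm F H) (arrangement F T) :=
  Finset.image_insert _ _ _

variable [CharZero F]

lemma lineForm_ne_zero (L : GridLine) : lineForm F L ≠ 0 := by
  intro h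
  have hcoeff (i : Fin 3) : coeff L i = 0 := by simpa using congrFun (linForm_eq_zero.mp h) i
  cases L <;> simp [coeff, Fin.forall_fin_succ] at hcoeff

lemma lineForm_ne_smul (h : L ≠ M) (c : F) : lineForm F L ≠ c • lineForm F M := by
  intro heq
  rw [lineForm, lineForm, ← linForm_smul] at heq
  have hcoeff (i : Fin 3) : (coeff L i : F) = c * coeff M i := congrFun (linForm_injective heq) i
  refine cross_coeff_ne_zero h (funext fun i => Int.cast_injective (α := F) ?_)
  fin_cases i <;> simp [cross_apply, hcoeff] <;> ring

lemma lineForm_injective : Function.Injective (lineForm F) := fun L M h => by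
  by_contra hne
  exact lineForm_ne_smul hne (1 : F) (by rw [h, one_smul])

lemma lineForm_mem_arrangement : lineForm F L ∈ arrangement F T ↔ L ∈ T :=
  lineForm_injective.mem_finset_image

lemma card_arrangement : (arrangement F T).card = T.card :=
  Finset.card_image_of_injective T lineForm_injective

lemma isArrangement_arrangement : IsArrangement (arrangement F T) := by
  simp only [IsArrangement, arrangement, Finset.forall_mem_image]
  exact ⟨fun L _ => ⟨lineForm_ne_zero L, linForm_isHomogeneous _⟩,
    fun L _ M _ hLM => lineForm_ne_smul fun h => hLM (by rw [h])⟩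

lemma trace_lineForm_eq_iff (hL : H ≠ L) (hM : H ≠ M) :
    trace (lineForm F H) (lineForm F L) = trace (lineForm F H) (lineForm F M) ↔
      Concurrent H L M := by
  have hA : IsArrangement (arrangement F {H, L, M}) := isArrangement_arrangement
  have hmem {N} (hN : N ∈ ({H, L, M} : Finset GridLine)) :=
    (lineForm_mem_arrangement (F := F)).mpr hN
  have hv : (fun i => ((coeff H ⨯₃ coeff L) i : F)) ≠ 0 := fun h =>
    cross_coeff_ne_zero hL (funext fun i => Int.cast_eq_zero.mp (congrFun h i))
  rw [eq_comm, hA.trace_eq_trace_iff (hmem (by simp)) (hmem (by simp)) (hmem (by simp))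
    (lineForm_injective.ne hL) (lineForm_injective.ne hM) hv, eval_lineForm_intCast,
    Int.cast_eq_zero, Concurrent]
  constructor <;> simp [eval_lineForm_intCast]

lemma IsTransversal.restCard_eq (h : IsTransversal H T S) (hH : H ∉ T) :
    restCard (arrangement F T) (lineForm F H) = S.card := by
  have hne {L} (hL : L ∈ T) : H ≠ L := (ne_of_mem_of_not_mem hL hH).symm
  have htrace {L M} (hL : L ∈ T) (hM : M ∈ T) :=
    trace_lineForm_eq_iff (F := F) (hne hL) (hne hM)
  have himage : T.image (fun L => trace (lineForm F H) (lineForm F L)) =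
      S.image fun L => trace (lineForm F H) (lineForm F L) := by
    refine (Finset.image_subset_iff.mpr fun L hL => ?_).antisymm
      (Finset.image_subset_image h.subset)
    obtain ⟨M, hM, hLM⟩ := h.exists_concurrent L hL
    exact Finset.mem_image.mpr ⟨M, hM, ((htrace hL (h.subset hM)).mpr hLM).symm⟩
  rw [restCard_eq_card_image_trace (mt lineForm_mem_arrangement.mp hH), arrangement,
    Finset.image_image, Function.comp_def, himage]
  exact Finset.card_image_of_injOn fun L hL M hM hLM =>
    h.eq_of_concurrent L hL M hM ((htrace (h.subset hL) (h.subset hM)).mp hLM)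

lemma IsTransversal.tjurina_insert_add (h : IsTransversal H T S) (hH : H ∉ T) :
    tjurina (arrangement F (insert H T)) + S.card = tjurina (arrangement F T) + 2 * T.card := by
  rw [← h.restCard_eq (F := F) hH, arrangement_insert, ← card_arrangement (F := F)]
  exact (arrangement_insert (F := F) ▸ isArrangement_arrangement).tjurina_insert_add_restCard
    (mt lineForm_mem_arrangement.mp hH)

lemma IsTransversal.logDerTrivialBelow_insert {r : ℕ} (h : IsTransversal H T S) (hH : H ∉ T)
    (hr : r + 2 ≤ S.card) (hT : LogDerTrivialBelow (arrangement F T) r) :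
    LogDerTrivialBelow (arrangement F (insert H T)) (r + 1) := by
  rw [arrangement_insert]
  exact hT.insert (arrangement_insert (F := F) ▸ isArrangement_arrangement)
    (mt lineForm_mem_arrangement.mp hH) (hr.trans_eq (h.restCard_eq hH).symm)

lemma IsTransversal.isExtremal_insert {e c : ℕ} (h : IsTransversal H T S) (hH : H ∉ T)
    (hS : S.card = e + c + 2) (hT : IsExtremal (arrangement F T) e c) :
    IsExtremal (arrangement F (insert H T)) e (c + 1) := by
  rw [arrangement_insert]
  exact hT.insert (arrangement_insert (F := F) ▸ isArrangement_arrangement)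
    (mt lineForm_mem_arrangement.mp hH) (by rw [h.restCard_eq hH, hS])

end GridLine

end GridArrangements

section Construction

variable {F : Type*} [Field F] [CharZero F]

namespace GridLine

lemma tjurina_grid_succ (e : ℕ) :
    tjurina (arrangement F (family (Finset.range (e + 1)) (Finset.range (e + 1)) ∅ ∅)) =
      tjurina (arrangement F (family (Finset.range e) (Finset.range e) ∅ ∅)) + 6 * e + 3 := by
  have hW := (isTransversal_horizontal (n := e) (V := Finset.range e)
    (W := Finset.range e)).tjurina_insert_add (F := F) (by simp)
  have hV := (isTransversal_vertical (n := e) (V := Finset.range e)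
    (W := Finset.range (e + 1))).tjurina_insert_add (F := F) (by simp)
  rw [← family_insert_horizontal, ← Finset.range_add_one] at hW
  rw [← family_insert_vertical, ← Finset.range_add_one] at hV
  simp only [card_family, Finset.card_range, Finset.card_empty] at hW hV
  omega

lemma logDerTrivialBelow_grid_succ {e : ℕ} (h : LogDerTrivialBelow
      (arrangement F (family (Finset.range e) (Finset.range e) ∅ ∅)) e) :
    LogDerTrivialBelow
      (arrangement F (family (Finset.range (e + 1)) (Finset.range (e + 1)) ∅ ∅)) (e + 1) := by
  rw [Finset.range_add_one (n := e), family_insert_vertical, ← Finset.range_add_one]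
  refine isTransversal_vertical.logDerTrivialBelow_insert (by simp)
    (by simp only [card_family, Finset.card_range, Finset.card_empty]; omega) ?_
  refine h.mono (Finset.image_subset_image ?_)
  rw [Finset.range_add_one, family_insert_horizontal]
  exact Finset.subset_insert _ _

lemma isExtremal_grid (e : ℕ) :
    IsExtremal (arrangement F (family (Finset.range e) (Finset.range e) ∅ ∅)) e 0 where
  card_eq := by
    simp only [card_arrangement, card_family, Finset.card_range, Finset.card_empty]
    ring
  logDerTrivialBelow := by
    induction e with
    | zero => exact logDerTrivialBelow_zero
    | succ e ih => exact logDerTrivialBelow_grid_succ ih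
  tjurina_add_choose := by
    induction e with
    | zero => simp [tjurina, card_arrangement, card_family, Finset.sum_range_succ]
    | succ e ih =>
      rw [tjurina_grid_succ]
      linarith

lemma isExtremal_diagonals {e c : ℕ} (hc : c ≤ e) :
    IsExtremal (arrangement F
      (family (Finset.range e) (Finset.range e) (Finset.Icc 1 c) ∅)) e c := by
  induction c with
  | zero => simpa using isExtremal_grid e
  | succ c ih =>
    rw [← Finset.insert_Icc_right_eq_Icc_add_one (by omega), family_insert_diagonal]
    exact (isTransversal_diagonal hc).isExtremal_insert (by simp)
      (by simp only [card_family, Finset.card_range, Finset.card_empty]; omega) (ih (by omega))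

/-- The antidiagonals `x + y = offset k q`, `q < 2 * k`, are added in this order to the grid of size
`2 * k` with all its diagonals: each meets the lines already present in one point more than the
preceding one. -/
def offset (k q : ℕ) : ℕ := max (3 * k + q) (2 * k + 2 * q + 1)

lemma offset_strictMono (k : ℕ) : StrictMono (offset k) := fun p q h => by
  simp only [offset]
  omega

lemma isExtremal_antidiagonals {k q : ℕ} (hq : q ≤ 2 * k) :
    IsExtremal (arrangement F (family (Finset.range (2 * k)) (Finset.range (2 * k))
      (Finset.Icc 1 (2 * k)) ((Finset.range q).image (offset k)))) (2 * k) (2 * k + q) := by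
  induction q with
  | zero => simpa using isExtremal_diagonals le_rfl
  | succ q ih =>
    rw [Finset.range_add_one, Finset.image_insert, family_insert_antidiagonal]
    refine (isTransversal_antidiagonal (s := offset k q) ?_ ?_).isExtremal_insert
      (c := 2 * k + q) ?_ ?_ (ih (by omega))
    · simp only [offset]; omega
    · simp only [offset]; omega
    · simp [(offset_strictMono k).injective.eq_iff]
    · rw [card_family, Finset.card_range, Finset.card_range, Nat.card_Icc, Finset.card_empty,
        offset]
      omega

lemma isEssential_arrangement {V W D E : Finset ℕ} {m n : ℕ} (hm : m ∈ V) (hn : n ∈ W) :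
    IsEssential (arrangement F (family V W D E)) := by
  intro v hv
  have hmem {L} (hL : L ∈ family V W D E) : eval v (lineForm F L) = 0 :=
    hv _ (lineForm_mem_arrangement.mpr hL)
  have hz := hmem infinity_mem_family
  have hx := hmem (vertical_mem_family.mpr hm)
  have hy := hmem (horizontal_mem_family.mpr hn)
  simp only [lineForm, eval_linForm, coeff, Matrix.vec3_dotProduct] at hx hy hz
  have hv2 : v 2 = 0 := by simpa using hz
  have hv0 : v 0 = 0 := by simpa [hv2] using hx
  have hv1 : v 1 = 0 := by simpa [hv2] using hy
  ext i
  fin_cases i <;> assumption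

lemma isMaxTjurina_of_isExtremal {e c : ℕ} {W D E : Finset ℕ} (hc : 1 ≤ c)
    (h : IsExtremal (arrangement F (family (Finset.range e) W D E)) e c) :
    IsMaxTjurina (arrangement F (family (Finset.range e) W D E)) (2 * e + 1 + c) (e + c) := by
  refine h.isMaxTjurina hc isArrangement_arrangement
    (P := arrangement F (family (Finset.range e) ∅ ∅ ∅)) (v := Pi.single 1 1)
    (Finset.image_subset_image fun L hL => ?_) ?_ (by simp) ?_
  · cases L <;> simp_all
  · simp [card_arrangement, card_family, add_comm]
  · refine Finset.forall_mem_image.mpr fun L hL => ?_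
    cases L <;> simp_all [lineForm, coeff]

end GridLine

open GridLine in
theorem exists_maxTjurina_odd_diff_real_general (F : Type*) [Field F] [CharZero F] {d r : ℕ}
    (hodd : Odd (d - r)) (h1 : d ≤ 2 * r) (h2 : 4 * r ≤ 3 * (d - 1)) :
    ∃ A : Finset (MvPolynomial (Fin 3) F),
      IsArrangement A ∧ IsEssential A ∧ IsMaxTjurina A d r := by
  obtain ⟨k, hk⟩ := hodd
  obtain ⟨c, rfl⟩ : ∃ c, r = 2 * k + c := Nat.exists_eq_add_of_le (by omega)
  obtain rfl : d = 2 * (2 * k) + 1 + c := by omega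
  have h0 : 0 ∈ Finset.range (2 * k) := Finset.mem_range.mpr (by omega)
  obtain hc | hc := le_or_gt c (2 * k)
  · exact ⟨_, isArrangement_arrangement, isEssential_arrangement h0 h0,
      isMaxTjurina_of_isExtremal (by omega) (isExtremal_diagonals hc)⟩
  · obtain ⟨q, rfl⟩ := Nat.exists_eq_add_of_le hc.le
    exact ⟨_, isArrangement_arrangement, isEssential_arrangement h0 h0,
      isMaxTjurina_of_isExtremal (by omega) (isExtremal_antidiagonals (by omega))⟩

end Construction

/-- For every pair of integers `(d, r)` with `d ≥ 4`, `d − r` odd, and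
`d/2 ≤ r ≤ 3(d−1)/4` (i.e. `2r ≥ d` and `4r ≤ 3(d−1)`), there exists a line
arrangement `A` of `d` lines in the real projective plane which is maximal Tjurina of
type `(d, r)`. -/
theorem exists_maxTjurina_odd_diff_real (d r : ℕ) (hd : 4 ≤ d)
    (hodd : Odd (d - r)) (h1 : d ≤ 2 * r) (h2 : 4 * r ≤ 3 * (d - 1)) :
    ∃ A : Finset (MvPolynomial (Fin 3) ℝ),
      IsArrangement A ∧ IsEssential A ∧ IsMaxTjurina A d r :=
  exists_maxTjurina_odd_diff_real_general ℝ hodd h1 h2
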